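/- Let N ≥ 2 and 1 ≤ k ≤ N, and let ψ_k = (1/√k) Σ_{i=1}^k e_i ⊗ e_i ∈ ℂ^N ⊗ ℂ^N. Then the average over the unitary group U(N) with respect to its normalized Haar measure satisfies ∫_{U(N)} (U ⊗ Ū) |ψ_k⟩⟨ψ_k| (U ⊗ Ū)† dU = (k/N)·|Ψ+⟩⟨Ψ+| + ((1 − k/N)/(N² − 1))·(I − |Ψ+⟩⟨Ψ+|), where Ū denotes the entrywise complex conjugate of U and the integral is the Bochner integral of the matrix-valued function. -/

import Mathlib

open Matrix BigOperators
open scoped ComplexOrder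

/-- The `n × n` matrix `M_ψ` associated to a vector `ψ ∈ ℂ^α ⊗ ℂ^β`,
with entries `(M_ψ)_{ij} = ⟨e_i ⊗ e_j, ψ⟩ = ψ (i, j)`. -/
def matOfVec {α β : Type*} (ψ : α × β → ℂ) : Matrix α β ℂ :=
  Matrix.of fun i j => ψ (i, j)

/-- The Schmidt rank of a bipartite vector is the rank of its associated matrix. -/
noncomputable def schmidtRank {α β : Type*} [Fintype β] (ψ : α × β → ℂ) : ℕ :=
  (matOfVec ψ).rank

/-- `ψ` is a unit vector. -/
def IsUnitVec {γ : Type*} [Fintype γ] (ψ : γ → ℂ) : Prop :=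
  ∑ x, Complex.normSq (ψ x) = 1

/-- The outer product `|ψ⟩⟨ψ|`. -/
def outer {γ : Type*} (ψ : γ → ℂ) : Matrix γ γ ℂ :=
  Matrix.of fun x y => ψ x * star (ψ y)

/-- `ρ ∈ S_k`: `ρ` admits a decomposition `ρ = ∑ i, p i • |ψ i⟩⟨ψ i|` with `p i ≥ 0`,
`∑ i, p i = 1`, each `ψ i` a unit vector of Schmidt rank at most `k`. -/
def InSchmidtClass {α : Type*} [Fintype α] (k : ℕ)
    (ρ : Matrix (α × α) (α × α) ℂ) : Prop :=
  ∃ (m : ℕ) (p : Fin m → ℝ) (ψ : Fin m → α × α → ℂ),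
    (∀ i, 0 ≤ p i) ∧ (∑ i, p i) = 1 ∧
    (∀ i, IsUnitVec (ψ i)) ∧ (∀ i, schmidtRank (ψ i) ≤ k) ∧
    ρ = ∑ i, (p i : ℂ) • outer (ψ i)

/-- The map `1 ⊗ Λ`, applying `Λ` to each block of a matrix indexed by `γ × Fin n`. -/
def blockMap {γ : Type*} {n m : ℕ}
    (Λ : Matrix (Fin n) (Fin n) ℂ → Matrix (Fin m) (Fin m) ℂ)
    (X : Matrix (γ × Fin n) (γ × Fin n) ℂ) : Matrix (γ × Fin m) (γ × Fin m) ℂ :=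
  Matrix.of fun a b => Λ (Matrix.of fun s t => X (a.1, s) (b.1, t)) a.2 b.2

/-- `Λ` is Hermiticity-preserving: `Λ(X†) = Λ(X)†`. -/
def HermPreserving {n m : ℕ}
    (Λ : Matrix (Fin n) (Fin n) ℂ → Matrix (Fin m) (Fin m) ℂ) : Prop :=
  ∀ X, Λ Xᴴ = (Λ X)ᴴ

/-- `Λ` is `k`-positive: `(1 ⊗ Λ)(|ψ⟩⟨ψ|)` is positive semidefinite for every
unit vector `ψ ∈ ℂ^N ⊗ ℂ^N` of Schmidt rank at most `k`. -/
def kPositive {N : ℕ} (k : ℕ)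
    (Λ : Matrix (Fin N) (Fin N) ℂ → Matrix (Fin N) (Fin N) ℂ) : Prop :=
  ∀ ψ : Fin N × Fin N → ℂ, IsUnitVec ψ → schmidtRank ψ ≤ k →
    (blockMap Λ (outer ψ)).PosSemidef

/-- The maximally entangled state `Ψ⁺ = (1/√N) ∑ i, e i ⊗ e i`. -/
noncomputable def psiPlus (N : ℕ) : Fin N × Fin N → ℂ :=
  fun x => if x.1 = x.2 then ((Real.sqrt N : ℂ))⁻¹ else 0

/-- The isotropic state `ρ_F = F |Ψ⁺⟩⟨Ψ⁺| + ((1−F)/(N²−1)) (I − |Ψ⁺⟩⟨Ψ⁺|)`. -/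
noncomputable def rhoF (N : ℕ) (F : ℝ) : Matrix (Fin N × Fin N) (Fin N × Fin N) ℂ :=
  (F : ℂ) • outer (psiPlus N) +
    (((1 - F) / ((N : ℝ) ^ 2 - 1) : ℝ) : ℂ) •
      ((1 : Matrix (Fin N × Fin N) (Fin N × Fin N) ℂ) - outer (psiPlus N))

open MeasureTheory Kronecker

attribute [local instance] Matrix.normedAddCommGroup Matrix.normedSpace

noncomputable instance {N : ℕ} : MeasurableSpace (Matrix.unitaryGroup (Fin N) ℂ) := borel _

instance {N : ℕ} : BorelSpace (Matrix.unitaryGroup (Fin N) ℂ) := ⟨rfl⟩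

/-- The maximally entangled Schmidt-rank-`k` vector `ψ_k = (1/√k) ∑_{i<k} e i ⊗ e i`. -/
noncomputable def psiK (N k : ℕ) : Fin N × Fin N → ℂ :=
  fun x => if x.1 = x.2 ∧ (x.1 : ℕ) < k then ((Real.sqrt k : ℂ))⁻¹ else 0

/-!
The average `T` of `(U ⊗ Ū) X (U ⊗ Ū)†` commutes with every `U ⊗ Ū`. Read as a linear map `Φ` on
`n × n` matrices, `U ⊗ Ū` is conjugation by `U`, so `Φ` commutes with conjugation by unitaries.
For an orthogonal projection `P`, comparing conjugation by the two unitaries `1 + (±i - 1) P`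
leaves exactly the commutator with `P`; as projections span all matrices, `Φ` commutes with `ad A`
for every `A`. Tracking the matrix units then forces `Φ X = α X + β (tr X) 1`, that is, `T` is a
combination of `1` and `|Ψ⁺⟩⟨Ψ⁺|`. The two coefficients are read off from `tr T` and
`tr (|Ψ⁺⟩⟨Ψ⁺| T)`, which averaging does not change.
-/

section GeneralLinearLieAlgebra

attribute [local instance] LieRing.ofAssociativeRing

variable {n R : Type*} [Fintype n] [DecidableEq n] [CommRing R]

lemma lie_single_single {i j k l : n} (hli : l ≠ i) :
    ⁅single i j (1 : R), single k l (1 : R)⁆ = if j = k then single i l 1 else 0 := by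
  rw [Ring.lie_def, single_mul_single_of_ne _ _ _ _ hli, sub_zero]
  rcases eq_or_ne j k with rfl | hjk
  · simp
  · rw [single_mul_single_of_ne _ _ _ _ hjk, if_neg hjk]

variable (Φ : Matrix n n R →ₗ⁅R,Matrix n n R⁆ Matrix n n R)

lemma lieModuleHom_single {i j : n} (hij : i ≠ j) :
    Φ (single i j 1) = Φ (single i j 1) i j • single i j 1 := by
  set M := Φ (single i j 1) with hM
  have hi : M = ⁅single i i (1 : R), M⁆ := by
    rw [hM, ← Φ.map_lie, lie_single_single hij.symm, if_pos rfl]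
  have hj : M = ⁅M, single j j (1 : R)⁆ := by
    rw [hM, ← lie_skew, ← Φ.map_lie, ← map_neg, lie_skew, lie_single_single hij.symm, if_pos rfl]
  have hji : M j i = 0 := by
    have hcomm : ⁅single i j (1 : R), M⁆ = 0 := by rw [hM, ← Φ.map_lie, lie_self, map_zero]
    simpa [Ring.lie_def, hij] using congrFun₂ hcomm i i
  calc M = ⁅⁅single i i (1 : R), M⁆, single j j (1 : R)⁆ := by rw [← hi, ← hj]
    _ = single i i 1 * M * single j j 1 + single j j 1 * M * single i i 1 := by
      simp only [Ring.lie_def, sub_mul, mul_sub, mul_assoc M, ← mul_assoc (single j j (1 : R)),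
        single_mul_single_of_ne _ _ _ _ hij, single_mul_single_of_ne _ _ _ _ hij.symm]
      simp [mul_assoc]
    _ = M i j • single i j 1 := by simp [single_mul_mul_single, hji, smul_single]

lemma lieModuleHom_single_apply_eq_of_row {i j l : n} (hij : i ≠ j) (hil : i ≠ l) :
    Φ (single i j 1) i j = Φ (single i l 1) i l := by
  have h : ⁅single i l (1 : R), single l j (1 : R)⁆ = single i j 1 := by
    rw [lie_single_single hij.symm, if_pos rfl]
  calc Φ (single i j 1) i j = (-⁅single l j (1 : R), Φ (single i l 1)⁆) i j := by
        rw [← h, ← lie_skew, map_neg, Φ.map_lie]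
    _ = Φ (single i l 1) i l := by
        simp [Ring.lie_def, hil]

lemma lieModuleHom_single_apply_swap {i j : n} (hij : i ≠ j) :
    Φ (single i j 1) i j = Φ (single j i 1) j i := by
  have h : ⁅single i j (1 : R), Φ (single j i 1)⁆ = -⁅single j i (1 : R), Φ (single i j 1)⁆ := by
    rw [← Φ.map_lie, ← Φ.map_lie, ← map_neg, lie_skew]
  have hii := congrFun₂ h i i
  simpa [Ring.lie_def, hij, hij.symm] using hii.symm

lemma lieModuleHom_single_apply_eq {i j p q : n} (hij : i ≠ j) (hpq : p ≠ q) :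
    Φ (single i j 1) i j = Φ (single p q 1) p q := by
  rcases eq_or_ne i q with rfl | hiq
  · rw [lieModuleHom_single_apply_eq_of_row Φ hij hpq.symm, lieModuleHom_single_apply_swap Φ hpq]
  · rw [lieModuleHom_single_apply_eq_of_row Φ hij hiq, lieModuleHom_single_apply_swap Φ hiq,
      lieModuleHom_single_apply_eq_of_row Φ hiq.symm hpq.symm, lieModuleHom_single_apply_swap Φ hpq]

lemma lieModuleHom_single_sub_single {i p : n} (hip : i ≠ p) :
    Φ (single i i 1 - single p p 1) = Φ (single p i 1) p i • (single i i 1 - single p p 1) := by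
  have h : ⁅single i p (1 : R), single p i (1 : R)⁆ = single i i 1 - single p p 1 := by
    simp [Ring.lie_def]
  rw [← h, Φ.map_lie, lieModuleHom_single Φ hip.symm, lie_smul]
  simp

lemma lieModuleHom_eq_smul_add_trace_smul {p q : n} (hpq : p ≠ q) (X : Matrix n n R) :
    Φ X = Φ (single p q 1) p q • X
      + X.trace • (Φ (single p p 1) - Φ (single p q 1) p q • single p p 1) := by
  set c := Φ (single p q 1) p q
  set S := Φ (single p p 1) - c • single p p 1
  suffices h : (Φ : Matrix n n R →ₗ[R] Matrix n n R)
      = c • LinearMap.id + (traceLinearMap n R R).smulRight S from LinearMap.congr_fun h X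
  refine ext_linearMap R fun i j => LinearMap.ext_ring ?_
  suffices Φ (single i j 1) = c • single i j 1 + (single i j (1 : R)).trace • S by simpa
  rcases eq_or_ne i j with rfl | hij
  · rcases eq_or_ne i p with rfl | hip
    · simp [S]
    · have h := lieModuleHom_single_sub_single Φ hip
      rw [lieModuleHom_single_apply_eq Φ hip.symm hpq, map_sub, smul_sub, sub_eq_iff_eq_add] at h
      rw [h, trace_single_eq_same, one_smul]
      module
  · rw [lieModuleHom_single Φ hij, lieModuleHom_single_apply_eq Φ hij hpq,
      trace_single_eq_of_ne _ _ _ hij, zero_smul, add_zero]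

theorem exists_lieModuleHom_eq_smul_add_trace_smul_one [Nontrivial n] :
    ∃ α β : R, ∀ X, Φ X = α • X + (β * X.trace) • 1 := by
  obtain ⟨p, q, hpq⟩ := exists_pair_ne n
  set c := Φ (single p q 1) p q
  set S := Φ (single p p 1) - c • single p p 1 with hS
  have hΦ : ∀ X, Φ X = c • X + X.trace • S := lieModuleHom_eq_smul_add_trace_smul Φ hpq
  have hcomm (A : Matrix n n R) : ⁅A, S⁆ = 0 := by
    rw [hS, lie_sub, ← Φ.map_lie, hΦ, LieAlgebra.matrix_trace_commutator_zero, zero_smul, add_zero,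
      lie_smul, sub_self]
  obtain ⟨β, hβ⟩ := mem_range_scalar_of_commute_single (M := S)
    fun i j _ => sub_eq_zero.mp (hcomm (single i j 1))
  refine ⟨c, β, fun X => ?_⟩
  rw [hΦ, ← hβ, scalar_apply, ← smul_one_eq_diagonal, smul_smul, mul_comm]

end GeneralLinearLieAlgebra

section UnitaryCovariance

attribute [local instance] LieRing.ofAssociativeRing

section StarAlgebra

variable {A : Type*} [Ring A] [StarRing A] [Algebra ℂ A] [StarModule ℂ A]

lemma one_add_smul_mem_unitary {P : A} (hP : IsStarProjection P) {z : ℂ} (hz : star z * z = 1) :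
    1 + (z - 1) • P ∈ unitary A := by
  have hPP : P * P = P := hP.isIdempotentElem
  have hcoeff : star (z - 1) * (z - 1) + star (z - 1) + (z - 1) = 0 := by
    rw [star_sub, star_one]
    linear_combination hz
  have hcomm : Commute (star (1 + (z - 1) • P)) (1 + (z - 1) • P) := by
    rw [star_add, star_smul, hP.isSelfAdjoint.star_eq, star_one]
    exact (Commute.one_left _).add_left
      (((Commute.one_right P).add_right ((Commute.refl P).smul_right _)).smul_left _)
  rw [Unitary.mem_iff, ← hcomm.eq, and_self, star_add, star_smul, hP.isSelfAdjoint.star_eq,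
    star_one]
  calc (1 + star (z - 1) • P) * (1 + (z - 1) • P)
      = 1 + (star (z - 1) * (z - 1) + star (z - 1) + (z - 1)) • P := by
        simp only [add_mul, mul_add, one_mul, mul_one, smul_mul_smul_comm, hPP]
        module
    _ = 1 := by rw [hcoeff, zero_smul, add_zero]

lemma two_I_smul_lie_eq_conj_sub_conj {P : A} (hP : IsStarProjection P) (X : A) :
    (2 * Complex.I) • ⁅P, X⁆ =
      (1 + (Complex.I - 1) • P) * X * star (1 + (Complex.I - 1) • P)
        - (1 + (-Complex.I - 1) • P) * X * star (1 + (-Complex.I - 1) • P) := by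
  simp only [star_add, star_smul, star_sub, star_neg, star_one, hP.isSelfAdjoint.star_eq,
    Complex.star_def, Complex.conj_I, Ring.lie_def, add_mul, mul_add, one_mul, mul_one,
    smul_mul_assoc, mul_smul_comm]
  module

variable {Φ : A →ₗ[ℂ] A}

lemma map_lie_of_isStarProjection
    (hΦ : ∀ U ∈ unitary A, ∀ X, Φ (U * X * star U) = U * Φ X * star U)
    {P : A} (hP : IsStarProjection P) (X : A) : Φ ⁅P, X⁆ = ⁅P, Φ X⁆ := by
  have hI : 1 + (Complex.I - 1) • P ∈ unitary A := one_add_smul_mem_unitary hP (by simp)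
  have hI' : 1 + (-Complex.I - 1) • P ∈ unitary A := one_add_smul_mem_unitary hP (by simp)
  have h2I : 2 * Complex.I ≠ 0 := by simp
  refine smul_right_injective A h2I ?_
  change (2 * Complex.I) • Φ ⁅P, X⁆ = (2 * Complex.I) • ⁅P, Φ X⁆
  rw [← map_smul, two_I_smul_lie_eq_conj_sub_conj hP, map_sub, hΦ _ hI, hΦ _ hI',
    two_I_smul_lie_eq_conj_sub_conj hP]

lemma map_lie_of_span_isStarProjection_eq_top
    (hspan : Submodule.span ℂ {P : A | IsStarProjection P} = ⊤)
    (hΦ : ∀ U ∈ unitary A, ∀ X, Φ (U * X * star U) = U * Φ X * star U) (B X : A) :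
    Φ ⁅B, X⁆ = ⁅B, Φ X⁆ := by
  induction hspan ▸ Submodule.mem_top (x := B) using Submodule.span_induction with
  | mem P hP => exact map_lie_of_isStarProjection hΦ hP X
  | zero => simp
  | add B C _ _ hB hC => rw [add_lie, map_add, hB, hC, add_lie]
  | smul c B _ hB => rw [smul_lie, map_smul, hB, smul_lie]

end StarAlgebra

variable {n : Type*} [Fintype n]

lemma span_isStarProjection_matrix_eq_top :
    Submodule.span ℂ {P : Matrix n n ℂ | IsStarProjection P} = ⊤ := by
  classical
  rw [eq_top_iff, ← span_selfAdjoint, Submodule.span_le]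
  intro A (hA : A.IsHermitian)
  rw [hA.spectral_theorem, ← sum_single_eq_diagonal, map_sum]
  refine Submodule.sum_mem _ fun i _ => ?_
  have hproj : IsStarProjection (single i i (1 : ℂ)) :=
    ⟨by simp [IsIdempotentElem], by simp [IsSelfAdjoint, star_eq_conjTranspose]⟩
  rw [← mul_one ((RCLike.ofReal ∘ hA.eigenvalues) i), ← smul_eq_mul, ← smul_single, map_smul]
  exact Submodule.smul_mem _ _ (Submodule.subset_span (hproj.map _))

lemma exists_eq_smul_add_trace_smul_one_of_unitary_covariant [DecidableEq n] [Nontrivial n]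
    {Φ : Matrix n n ℂ →ₗ[ℂ] Matrix n n ℂ}
    (hΦ : ∀ U ∈ unitaryGroup n ℂ, ∀ X, Φ (U * X * Uᴴ) = U * Φ X * Uᴴ) :
    ∃ α β : ℂ, ∀ X, Φ X = α • X + (β * X.trace) • 1 :=
  exists_lieModuleHom_eq_smul_add_trace_smul_one
    { Φ with
      map_lie' :=
        map_lie_of_span_isStarProjection_eq_top span_isStarProjection_matrix_eq_top hΦ _ _ }

end UnitaryCovariance

section Superoperator

variable {n R : Type*} [Fintype n] [DecidableEq n] [CommSemiring R]

/-- The reading of a matrix `T` on `Rⁿ ⊗ Rⁿ` as a linear map on `n × n` matrices, where the matrix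
`X` stands for the vector `∑ i j, X i j • (e i ⊗ e j)`. -/
noncomputable def superoperator :
    Matrix (n × n) (n × n) R ≃ₐ[R] Module.End R (Matrix n n R) :=
  toLinAlgEquiv'.trans (((LinearEquiv.curry R R n n).trans (ofLinearEquiv R)).conjAlgEquiv R)

lemma superoperator_apply (T : Matrix (n × n) (n × n) R) (X : Matrix n n R) (i j : n) :
    superoperator T X i j = ∑ p : n × n, T (i, j) p * X p.1 p.2 :=
  rfl

lemma superoperator_kronecker (A B X : Matrix n n R) :
    superoperator (A ⊗ₖ B) X = A * X * Bᵀ := by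
  ext i j
  simp only [superoperator_apply, Fintype.sum_prod_type, kronecker_apply, mul_apply,
    transpose_apply, Finset.sum_mul]
  rw [Finset.sum_comm]
  exact Finset.sum_congr rfl fun _ _ => Finset.sum_congr rfl fun _ _ => by ring

end Superoperator

section MaximallyEntangledProjection

variable {n : Type*} [Fintype n] [DecidableEq n]

variable (n) in
/-- The projection `|Ψ⁺⟩⟨Ψ⁺|` onto the maximally entangled vector `(card n)^(-1/2) ∑ i, e i ⊗ e i`
of `ℂⁿ ⊗ ℂⁿ`; here `vec 1` is the unnormalized vector `∑ i, e i ⊗ e i`. -/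
noncomputable def maxEntangledProj : Matrix (n × n) (n × n) ℂ :=
  (Fintype.card n : ℂ)⁻¹ • vecMulVec (vec 1) (vec 1)

lemma superoperator_maxEntangledProj (X : Matrix n n ℂ) :
    superoperator (maxEntangledProj n) X = ((Fintype.card n : ℂ)⁻¹ * X.trace) • 1 := by
  ext i j
  simp [superoperator_apply, maxEntangledProj, vecMulVec_apply, vec, one_apply, trace,
    Fintype.sum_prod_type, Finset.mul_sum, eq_comm]

variable [Nonempty n]

lemma maxEntangledProj_mul_self :
    maxEntangledProj n * maxEntangledProj n = maxEntangledProj n := by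
  refine superoperator.injective (LinearMap.ext fun X => ?_)
  simp [superoperator_maxEntangledProj]

lemma trace_maxEntangledProj : (maxEntangledProj n).trace = 1 := by
  simp [maxEntangledProj, vec_dotProduct_vec]

end MaximallyEntangledProjection

section TensorConjugate

variable {n : Type*} [Fintype n] [DecidableEq n]

/-- The representation `U ↦ U ⊗ Ū` of the unitary group on `ℂⁿ ⊗ ℂⁿ`. -/
noncomputable def tensorConj : unitaryGroup n ℂ →ₜ* unitaryGroup (n × n) ℂ where
  toFun U := ⟨(U : Matrix n n ℂ) ⊗ₖ (U : Matrix n n ℂ).map (starRingEnd ℂ),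
    kronecker_mem_unitary U.2 (map_star_mem_unitaryGroup_iff.mpr U.2)⟩
  map_one' := Subtype.ext <| by simp
  map_mul' U V := Subtype.ext <| by simp [Matrix.map_mul, mul_kronecker_mul]
  continuous_toFun := by
    refine Continuous.subtype_mk (continuous_matrix fun x y => ?_) _
    change Continuous fun U : unitaryGroup n ℂ =>
      (U : Matrix n n ℂ) x.1 y.1 * star ((U : Matrix n n ℂ) x.2 y.2)
    have hval : Continuous fun U : unitaryGroup n ℂ => (U : Matrix n n ℂ) := continuous_subtype_val
    exact (hval.matrix_elem x.1 y.1).mul (hval.matrix_elem x.2 y.2).star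

lemma coe_tensorConj (U : unitaryGroup n ℂ) : (tensorConj U : Matrix (n × n) (n × n) ℂ) =
    (U : Matrix n n ℂ) ⊗ₖ (U : Matrix n n ℂ).map (starRingEnd ℂ) := rfl

lemma superoperator_tensorConj (U : unitaryGroup n ℂ) (X : Matrix n n ℂ) :
    superoperator (tensorConj U : Matrix (n × n) (n × n) ℂ) X = U * X * (U : Matrix n n ℂ)ᴴ := by
  rw [coe_tensorConj, superoperator_kronecker]
  rfl

lemma commute_maxEntangledProj_tensorConj (U : unitaryGroup n ℂ) :
    Commute (maxEntangledProj n) (tensorConj U : Matrix (n × n) (n × n) ℂ) := by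
  have hU : (U : Matrix n n ℂ) * (U : Matrix n n ℂ)ᴴ = 1 := mem_unitaryGroup_iff.mp U.2
  have hU' : (U : Matrix n n ℂ)ᴴ * U = 1 := mem_unitaryGroup_iff'.mp U.2
  refine superoperator.injective (LinearMap.ext fun X => ?_)
  simp only [map_mul, Module.End.mul_apply, superoperator_tensorConj,
    superoperator_maxEntangledProj]
  rw [trace_mul_cycle, hU', one_mul, mul_smul_comm, smul_mul_assoc, mul_one, hU]

theorem exists_eq_smul_one_add_smul_maxEntangledProj [Nontrivial n]
    {T : Matrix (n × n) (n × n) ℂ} (hT : ∀ U : unitaryGroup n ℂ,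
      Commute T (tensorConj U : Matrix (n × n) (n × n) ℂ)) :
    ∃ α β : ℂ, T = α • 1 + β • maxEntangledProj n := by
  have hcov : ∀ U ∈ unitaryGroup n ℂ, ∀ X,
      superoperator T (U * X * Uᴴ) = U * superoperator T X * Uᴴ := fun U hU X => by
    have h := LinearMap.congr_fun (congrArg superoperator (hT ⟨U, hU⟩).eq) X
    simpa only [map_mul, Module.End.mul_apply, superoperator_tensorConj] using h
  obtain ⟨α, β, h⟩ := exists_eq_smul_add_trace_smul_one_of_unitary_covariant hcov
  refine ⟨α, Fintype.card n * β, superoperator.injective (LinearMap.ext fun X => ?_)⟩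
  have hn : (Fintype.card n : ℂ) ≠ 0 := by simp
  rw [h, map_add, map_smul, map_smul, map_one, LinearMap.add_apply, LinearMap.smul_apply,
    LinearMap.smul_apply, Module.End.one_apply, superoperator_maxEntangledProj, smul_smul]
  congr 2
  field_simp

end TensorConjugate

section Twirl

variable {G m : Type*} [Group G] [TopologicalSpace G] [MeasurableSpace G]
  [Fintype m] [DecidableEq m]

/-- The twirl of `X` by a representation `ρ`: the average of `ρ g * X * (ρ g)ᴴ` over `μ`. -/
noncomputable def twirl (μ : Measure G) (ρ : G →ₜ* unitaryGroup m ℂ) (X : Matrix m m ℂ) :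
    Matrix m m ℂ :=
  ∫ g, (ρ g : Matrix m m ℂ) * X * (ρ g : Matrix m m ℂ)ᴴ ∂μ

variable [CompactSpace G] [BorelSpace G] (μ : Measure G) (ρ : G →ₜ* unitaryGroup m ℂ)
  (X : Matrix m m ℂ)

lemma map_twirl [IsFiniteMeasure μ] {E : Type*} [NormedAddCommGroup E] [NormedSpace ℂ E]
    [CompleteSpace E] (L : Matrix m m ℂ →ₗ[ℂ] E) :
    L (twirl μ ρ X) = ∫ g, L ((ρ g : Matrix m m ℂ) * X * (ρ g : Matrix m m ℂ)ᴴ) ∂μ := by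
  have hρ : Continuous fun g => (ρ g : Matrix m m ℂ) :=
    continuous_subtype_val.comp ρ.continuous_toFun
  have hconj : Continuous fun g => (ρ g : Matrix m m ℂ) * X * (ρ g : Matrix m m ℂ)ᴴ :=
    (hρ.matrix_mul continuous_const).matrix_mul hρ.matrix_conjTranspose
  exact (L.toContinuousLinearMap.integral_comp_comm
    (hconj.integrable_of_hasCompactSupport (.of_compactSpace _))).symm

lemma commute_twirl [IsFiniteMeasure μ] [IsTopologicalGroup G] [μ.IsMulLeftInvariant] (h : G) :
    Commute (twirl μ ρ X) (ρ h : Matrix m m ℂ) := by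
  have hinv : (ρ h : Matrix m m ℂ) * twirl μ ρ X * (ρ h : Matrix m m ℂ)ᴴ = twirl μ ρ X :=
    calc (ρ h : Matrix m m ℂ) * twirl μ ρ X * (ρ h : Matrix m m ℂ)ᴴ
        = ∫ g, (ρ h : Matrix m m ℂ) * (ρ g * X * (ρ g : Matrix m m ℂ)ᴴ)
            * (ρ h : Matrix m m ℂ)ᴴ ∂μ :=
          map_twirl μ ρ X (LinearMap.mulLeftRight ℂ ((ρ h : Matrix m m ℂ), (ρ h : Matrix m m ℂ)ᴴ))
      _ = ∫ g, (ρ (h * g) : Matrix m m ℂ) * X * (ρ (h * g) : Matrix m m ℂ)ᴴ ∂μ := by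
          simp only [map_mul, UnitaryGroup.mul_val, conjTranspose_mul, Matrix.mul_assoc]
      _ = twirl μ ρ X := integral_mul_left_eq_self (μ := μ)
          (fun g => (ρ g : Matrix m m ℂ) * X * (ρ g : Matrix m m ℂ)ᴴ) h
  have hρ : (ρ h : Matrix m m ℂ)ᴴ * ρ h = 1 := mem_unitaryGroup_iff'.mp (ρ h).2
  calc twirl μ ρ X * ρ h
      = ρ h * twirl μ ρ X * (ρ h : Matrix m m ℂ)ᴴ * ρ h := by rw [hinv]
    _ = ρ h * twirl μ ρ X := by rw [Matrix.mul_assoc, hρ, Matrix.mul_one]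

lemma trace_mul_twirl [IsProbabilityMeasure μ] {M : Matrix m m ℂ}
    (hM : ∀ g, Commute M (ρ g : Matrix m m ℂ)) :
    (M * twirl μ ρ X).trace = (M * X).trace := by
  have hconst (g : G) : (M * (ρ g * X * (ρ g : Matrix m m ℂ)ᴴ)).trace = (M * X).trace := by
    have hρ : (ρ g : Matrix m m ℂ)ᴴ * ρ g = 1 := mem_unitaryGroup_iff'.mp (ρ g).2
    rw [← Matrix.mul_assoc, ← Matrix.mul_assoc, (hM g).eq, trace_mul_comm, ← Matrix.mul_assoc,
      ← Matrix.mul_assoc, hρ, Matrix.one_mul]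
  calc (M * twirl μ ρ X).trace
      = ∫ g, (M * (ρ g * X * (ρ g : Matrix m m ℂ)ᴴ)).trace ∂μ :=
        map_twirl μ ρ X (traceLinearMap m ℂ ℂ ∘ₗ LinearMap.mulLeft ℂ M)
    _ = (M * X).trace := by simp [hconst]

end Twirl

section IsotropicTwirl

variable {n : Type*} [Fintype n] [DecidableEq n]

lemma compactSpace_unitaryGroup : CompactSpace (unitaryGroup n ℂ) := by
  have : ProperSpace (Matrix n n ℂ) := FiniteDimensional.proper ℂ _
  refine isCompact_iff_compactSpace.mp (Metric.isCompact_of_isClosed_isBounded ?_ ?_)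
  · exact @isClosed_unitary (Matrix n n ℂ) _ _ instTopologicalSpaceMatrix _ _ _
  · exact isBounded_iff_forall_norm_le.mpr ⟨1, fun U hU => entrywise_sup_norm_bound_of_unitary hU⟩

theorem twirl_tensorConj [Nontrivial n] [MeasurableSpace (unitaryGroup n ℂ)]
    [BorelSpace (unitaryGroup n ℂ)] (μ : Measure (unitaryGroup n ℂ)) [μ.IsMulLeftInvariant]
    [IsProbabilityMeasure μ] (X : Matrix (n × n) (n × n) ℂ) :
    twirl μ tensorConj X = (maxEntangledProj n * X).trace • maxEntangledProj n +
      ((X.trace - (maxEntangledProj n * X).trace) / ((Fintype.card n : ℂ) ^ 2 - 1)) •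
        (1 - maxEntangledProj n) := by
  have := compactSpace_unitaryGroup (n := n)
  have hn : (Fintype.card n : ℂ) ^ 2 - 1 ≠ 0 := by
    have h : 1 < Fintype.card n ^ 2 := Nat.one_lt_pow two_ne_zero Fintype.one_lt_card
    exact sub_ne_zero.mpr (mod_cast h.ne')
  obtain ⟨α, β, hT⟩ := exists_eq_smul_one_add_smul_maxEntangledProj
    (commute_twirl μ tensorConj X)
  have htrace : X.trace = α * (Fintype.card n : ℂ) ^ 2 + β := by
    have h := trace_mul_twirl μ tensorConj X (fun g => Commute.one_left _)
    simpa [hT, trace_maxEntangledProj, sq] using h.symm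
  have hoverlap : (maxEntangledProj n * X).trace = α + β := by
    have h := trace_mul_twirl μ tensorConj X commute_maxEntangledProj_tensorConj
    simpa [hT, mul_add, maxEntangledProj_mul_self, trace_maxEntangledProj] using h.symm
  have hα : (X.trace - (maxEntangledProj n * X).trace) / ((Fintype.card n : ℂ) ^ 2 - 1) = α := by
    rw [div_eq_iff hn, htrace, hoverlap]
    ring
  rw [hα, hoverlap, hT]
  module

end IsotropicTwirl

section SchmidtRankState

lemma inv_sqrt_mul_star_inv_sqrt (m : ℕ) :
    ((√(m : ℝ) : ℂ))⁻¹ * star ((√(m : ℝ) : ℂ))⁻¹ = (m : ℂ)⁻¹ := by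
  rw [star_inv₀, Complex.star_def, Complex.conj_ofReal, ← mul_inv, ← Complex.ofReal_mul,
    Real.mul_self_sqrt m.cast_nonneg, Complex.ofReal_natCast]

lemma outer_psiPlus (N : ℕ) : outer (psiPlus N) = maxEntangledProj (Fin N) := by
  ext ⟨a, b⟩ ⟨c, d⟩
  simp only [outer, psiPlus, maxEntangledProj, of_apply, Matrix.smul_apply, vecMulVec_apply, vec,
    one_apply, smul_eq_mul, @eq_comm _ b a, @eq_comm _ d c, Fintype.card_fin,
    ← inv_sqrt_mul_star_inv_sqrt N]
  split_ifs <;> simp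

lemma trace_maxEntangledProj_mul_outer {n : Type*} [Fintype n] [DecidableEq n] (ψ : n × n → ℂ) :
    (maxEntangledProj n * outer ψ).trace =
      (Fintype.card n : ℂ)⁻¹ * ((∑ i, ψ (i, i)) * star (∑ i, ψ (i, i))) := by
  have houter : outer ψ = vecMulVec ψ (star ψ) := rfl
  have hdot (φ : n × n → ℂ) : φ ⬝ᵥ vec 1 = ∑ i, φ (i, i) := by
    simp [dotProduct, vec, one_apply, Fintype.sum_prod_type]
  have hdot' : vec (1 : Matrix n n ℂ) ⬝ᵥ star ψ = star (∑ i, ψ (i, i)) := by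
    rw [dotProduct_comm, hdot, star_sum]
    rfl
  rw [houter, maxEntangledProj, smul_mul_assoc, vecMulVec_mul_vecMulVec, trace_smul,
    trace_vecMulVec, dotProduct_smul, dotProduct_comm _ ψ, hdot, hdot', smul_eq_mul, smul_eq_mul]

variable {N k : ℕ}

lemma sum_psiK_diag (hkN : k ≤ N) : ∑ i, psiK N k (i, i) = k * ((√(k : ℝ) : ℂ))⁻¹ := by
  simp [psiK, ← Finset.sum_filter, Fin.card_filter_val_lt, hkN]

lemma trace_outer_psiK (hk : k ≠ 0) (hkN : k ≤ N) : (outer (psiK N k)).trace = 1 := by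
  have hk' : (k : ℂ) ≠ 0 := Nat.cast_ne_zero.mpr hk
  calc (outer (psiK N k)).trace
      = ∑ x, psiK N k x * star (psiK N k x) := rfl
    _ = ∑ i : Fin N, ∑ j : Fin N, if i = j then (if (i : ℕ) < k then (k : ℂ)⁻¹ else 0) else 0 := by
        rw [Fintype.sum_prod_type]
        refine Finset.sum_congr rfl fun i _ => Finset.sum_congr rfl fun j _ => ?_
        simp only [psiK, ite_and, ← inv_sqrt_mul_star_inv_sqrt k]
        split_ifs <;> simp
    _ = 1 := by
        simp [← Finset.sum_filter, Fin.card_filter_val_lt, hkN, hk']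

lemma trace_maxEntangledProj_mul_outer_psiK (hkN : k ≤ N) :
    (maxEntangledProj (Fin N) * outer (psiK N k)).trace = k / N := by
  rw [trace_maxEntangledProj_mul_outer, sum_psiK_diag hkN, star_mul', mul_mul_mul_comm,
    inv_sqrt_mul_star_inv_sqrt, star_natCast, mul_self_mul_inv, Fintype.card_fin, div_eq_inv_mul]

end SchmidtRankState

/-- Twirling `|ψ_k⟩⟨ψ_k|` over the unitary group with its normalized Haar
measure yields `(k/N)|Ψ⁺⟩⟨Ψ⁺| + ((1 − k/N)/(N² − 1))(I − |Ψ⁺⟩⟨Ψ⁺|)`, i.e. `ρ_{F = k/N}`. -/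
theorem twirl_psiK {N k : ℕ} (hN : 2 ≤ N) (hk : 1 ≤ k) (hkN : k ≤ N)
    (μ : Measure (Matrix.unitaryGroup (Fin N) ℂ))
    [μ.IsHaarMeasure] [IsProbabilityMeasure μ] :
    ∫ U : Matrix.unitaryGroup (Fin N) ℂ,
        (((U : Matrix (Fin N) (Fin N) ℂ) ⊗ₖ ((U : Matrix (Fin N) (Fin N) ℂ).map (starRingEnd ℂ)))
          * outer (psiK N k) *
          (((U : Matrix (Fin N) (Fin N) ℂ) ⊗ₖ ((U : Matrix (Fin N) (Fin N) ℂ).map (starRingEnd ℂ)))ᴴ)) ∂μ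
      = rhoF N ((k : ℝ) / N) := by
  have : Nontrivial (Fin N) := Fin.nontrivial_iff_two_le.mpr hN
  change twirl μ tensorConj (outer (psiK N k)) = rhoF N (k / N)
  rw [twirl_tensorConj, trace_maxEntangledProj_mul_outer_psiK hkN,
    trace_outer_psiK (Nat.one_le_iff_ne_zero.mp hk) hkN, rhoF, outer_psiPlus, Fintype.card_fin]
  push_cast
  rfl
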